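/- Let G = (V, E) be a graph and let TH̃(G) := {X̂ ∈ S₊^{{0}∪V} : X̂_{00} = 1, X̂_{0i} = X̂_{ii} ∀i ∈ V, X̂_{ij} = 0 ∀ij ∈ E} be the lifted theta body. Then the vertices of TH̃(G) are exactly the matrices (1 ⊕ χ_S)(1 ⊕ χ_S)ᵀ where S ⊆ V is a stable (independent) set of G and χ_S is its incidence vector. -/

import Mathlib

open Matrix

/-- The normal cone, within the space of symmetric matrices (with the trace inner
product), of a set `C` of symmetric matrices at a point `X`. -/
def normalConeM {ι : Type*} [Fintype ι] (C : Set (Matrix ι ι ℝ)) (X : Matrix ι ι ℝ) :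
    Set (Matrix ι ι ℝ) :=
  {c | c.IsSymm ∧ ∀ Y ∈ C, (c * Y).trace ≤ (c * X).trace}

/-- A point of a convex set of symmetric matrices is a vertex if its normal cone is
full-dimensional in the space `Sym(ι)` of symmetric matrices, whose dimension is
`card ι * (card ι + 1) / 2`. -/
def IsVertex {ι : Type*} [Fintype ι] (C : Set (Matrix ι ι ℝ)) (X : Matrix ι ι ℝ) : Prop :=
  X ∈ C ∧ Module.finrank ℝ (Submodule.span ℝ (normalConeM C X))
      = Fintype.card ι * (Fintype.card ι + 1) / 2

/-!
A point `X` is a vertex iff no nonzero symmetric matrix is trace-orthogonal to its normal cone; in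
particular no curve inside the body passes through a vertex with nonzero velocity.

Think of `X` as the Gram matrix of vectors `x₀, x_i`, where `x_i` is the orthogonal projection of
the unit vector `x₀` onto the line `ℝ x_i`. Keeping these lines and replacing `x₀` by another unit
vector, together with its projections, gives another point of the body. Rotating `x₀` towards `x_i`
is thus a curve in the body. Its velocity, which vanishes at a vertex, is a multiple of
`X i k - X 0 i * X 0 k` in entry `0 k`. So a vertex is `u uᵀ` with `u 0 = 1`, and then
`u i = u i ^ 2` makes `u` an incidence vector.

Conversely, the normal cone at `u uᵀ` contains `-v vᵀ` for all `v ⊥ u`, as well as both signs of the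
functionals that are constant on the body; these leave no orthogonal direction.
-/

section SymmetricMatrices

variable {ι R : Type*} [CommRing R]

variable (ι R) in
/-- The space of symmetric `ι × ι` matrices over `R`, the ambient space of the normal cones. -/
def symmetricMatrices : Submodule R (Matrix ι ι R) where
  carrier := {A | A.IsSymm}
  add_mem' := IsSymm.add
  zero_mem' := isSymm_zero
  smul_mem' c _ hA := hA.smul c

theorem mem_symmetricMatrices {A : Matrix ι ι R} : A ∈ symmetricMatrices ι R ↔ A.IsSymm := Iff.rfl

variable (ι R) in
/-- A symmetric matrix is a function on unordered pairs of indices. -/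
def symmetricMatricesEquivSym2 : symmetricMatrices ι R ≃ₗ[R] (Sym2 ι → R) where
  toFun A := Sym2.lift ⟨fun i j => A.1 i j, fun i j => A.2.apply j i⟩
  invFun f := ⟨of fun i j => f s(i, j), IsSymm.ext fun i j => by simp [Sym2.eq_swap]⟩
  left_inv A := by ext i j; simp
  right_inv f := by ext s; induction s with | _ i j => simp
  map_add' A B := by ext s; induction s with | _ i j => simp
  map_smul' c A := by ext s; induction s with | _ i j => simp

theorem finrank_symmetricMatrices [Nontrivial R] [Fintype ι] :
    Module.finrank R (symmetricMatrices ι R) = Fintype.card ι * (Fintype.card ι + 1) / 2 := by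
  classical
  rw [(symmetricMatricesEquivSym2 ι R).finrank_eq, Module.finrank_fintype_fun_eq_card, Sym2.card,
    Nat.choose_two_right, Nat.add_sub_cancel, mul_comm]

theorem exists_isSymm_trace_mul_eq_two_mul [Fintype ι] (f : Matrix ι ι R →ₗ[R] R) :
    ∃ D : Matrix ι ι R, D.IsSymm ∧ ∀ A : Matrix ι ι R, A.IsSymm → (A * D).trace = 2 * f A := by
  classical
  refine ⟨of fun i j => f (single i j 1) + f (single j i 1),
    IsSymm.ext fun i j => add_comm _ _, fun A hA => ?_⟩
  have f_eq_sum : f A = ∑ i, ∑ j, A i j * f (single i j 1) := by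
    conv_lhs => rw [matrix_eq_sum_single A]
    refine (map_sum f _ _).trans (Finset.sum_congr rfl fun i _ => (map_sum f _ _).trans
      (Finset.sum_congr rfl fun j _ => ?_))
    rw [← smul_eq_mul, ← map_smul, smul_single, smul_eq_mul, mul_one]
  have f_eq_sum_swap : f A = ∑ i, ∑ j, A i j * f (single j i 1) := by
    rw [f_eq_sum, Finset.sum_comm]
    simp only [hA.apply]
  rw [two_mul]
  nth_rw 1 [f_eq_sum_swap]
  rw [f_eq_sum]
  simp only [trace, diag_apply, mul_apply, of_apply, mul_add, Finset.sum_add_distrib]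

theorem trace_vecMulVec_mul_eq_dotProduct_mulVec [Fintype ι] (v : ι → R) (A : Matrix ι ι R) :
    (vecMulVec v v * A).trace = v ⬝ᵥ A *ᵥ v := by
  rw [vecMulVec_mul, trace_vecMulVec, dotProduct_mulVec, dotProduct_comm]

end SymmetricMatrices

section NormalCone

variable {ι : Type*} [Fintype ι] {C : Set (Matrix ι ι ℝ)} {X : Matrix ι ι ℝ}

theorem span_normalConeM_le_symmetricMatrices :
    Submodule.span ℝ (normalConeM C X) ≤ symmetricMatrices ι ℝ :=
  Submodule.span_le.2 fun _ hA => hA.1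

theorem isVertex_iff_span_normalConeM_eq :
    IsVertex C X ↔ X ∈ C ∧ Submodule.span ℝ (normalConeM C X) = symmetricMatrices ι ℝ := by
  rw [IsVertex, ← finrank_symmetricMatrices (R := ℝ)]
  exact and_congr_right fun _ => ⟨Submodule.eq_of_le_of_finrank_eq
    span_normalConeM_le_symmetricMatrices, fun h => by rw [h]⟩

theorem isVertex_iff_forall_trace_mul_eq_zero :
    IsVertex C X ↔ X ∈ C ∧ ∀ D : Matrix ι ι ℝ, D.IsSymm →
      (∀ A ∈ normalConeM C X, (A * D).trace = 0) → D = 0 := by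
  rw [isVertex_iff_span_normalConeM_eq]
  refine and_congr_right fun _ => ⟨fun hspan D hD hN => ?_, fun hN => ?_⟩
  · have le_ker : Submodule.span ℝ (normalConeM C X) ≤
        LinearMap.ker (traceLinearMap ι ℝ ℝ ∘ₗ LinearMap.mulRight ℝ D) :=
      Submodule.span_le.2 hN
    have trace_mul_self : (D * D).trace = 0 := le_ker (hspan ▸ mem_symmetricMatrices.2 hD)
    rwa [← trace_conjTranspose_mul_self_eq_zero_iff, conjTranspose_eq_transpose_of_trivial, hD.eq]
  · refine le_antisymm span_normalConeM_le_symmetricMatrices fun B hB => ?_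
    by_contra hBspan
    obtain ⟨f, hfB, hf⟩ := Submodule.exists_le_ker_of_notMem hBspan
    obtain ⟨D, hD, hDf⟩ := exists_isSymm_trace_mul_eq_two_mul f
    have hD0 : D = 0 := hN D hD fun A hA => by
      rw [hDf A hA.1, hf (Submodule.subset_span hA), mul_zero]
    have two_mul_fB : 2 * f B = 0 := by rw [← hDf B hB, hD0, mul_zero, trace_zero]
    exact hfB (by linarith)

theorem IsVertex.deriv_apply_eq_zero (hX : IsVertex C X) (hC : ∀ Y ∈ C, Y.IsSymm)
    {γ : ℝ → Matrix ι ι ℝ} {t₀ : ℝ} (hγX : γ t₀ = X) (hγC : ∀ᶠ t in nhds t₀, γ t ∈ C)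
    (hγ : ∀ i j, DifferentiableAt ℝ (fun t => γ t i j) t₀) (i j : ι) :
    deriv (fun t => γ t i j) t₀ = 0 := by
  subst hγX
  let D : Matrix ι ι ℝ := of fun i j => deriv (fun t => γ t i j) t₀
  have hD : D.IsSymm := IsSymm.ext fun i j =>
    Filter.EventuallyEq.deriv_eq <| hγC.mono fun t ht => (hC _ ht).apply i j
  have hD0 : D = 0 := by
    refine (isVertex_iff_forall_trace_mul_eq_zero.1 hX).2 D hD fun A hA => ?_
    have hmax : IsLocalMax (fun t => (A * γ t).trace) t₀ := hγC.mono fun t ht => hA.2 _ ht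
    refine hmax.hasDerivAt_eq_zero ?_
    simp only [trace, diag_apply, mul_apply]
    exact HasDerivAt.fun_sum fun i _ => HasDerivAt.fun_sum fun j _ =>
      (hγ j i).hasDerivAt.const_mul (A i j)
  exact congrFun₂ hD0 i j

theorem mem_normalConeM_of_forall_trace_mul_eq {A : Matrix ι ι ℝ} (hA : A.IsSymm)
    (hconst : ∀ Y ∈ C, (A * Y).trace = (A * X).trace) : A ∈ normalConeM C X :=
  ⟨hA, fun Y hY => (hconst Y hY).le⟩

theorem neg_vecMulVec_mem_normalConeM (hC : ∀ Y ∈ C, Y.PosSemidef) {v : ι → ℝ}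
    (hv : v ⬝ᵥ X *ᵥ v = 0) : -vecMulVec v v ∈ normalConeM C X := by
  refine ⟨IsSymm.neg (transpose_vecMulVec v v), fun Y hY => ?_⟩
  simpa only [neg_mul, trace_neg, trace_vecMulVec_mul_eq_dotProduct_mulVec, hv, neg_zero,
    Left.neg_nonpos_iff, star_trivial] using (hC Y hY).dotProduct_mulVec_nonneg v

end NormalCone

theorem apply_eq_zero_of_posSemidef_of_diag_eq_zero {ι : Type*} [Finite ι] {X : Matrix ι ι ℝ}
    (hX : X.PosSemidef) {k : ι} (hk : X k k = 0) (i : ι) : X i k = 0 := by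
  classical
  have := Fintype.ofFinite ι
  have mulVec_single_eq_zero : X *ᵥ Pi.single k 1 = 0 :=
    (hX.dotProduct_mulVec_zero_iff (Pi.single k 1)).1 (by simp [hk])
  simpa using congrFun mulVec_single_eq_zero i

theorem eq_zero_of_forall_dotProduct_mulVec_eq_zero {ι K : Type*} [Fintype ι] [Field K]
    [NeZero (2 : K)] {D : Matrix ι ι K} (hD : D.IsSymm) {o : ι} (hoo : D o o = 0)
    (ho : ∀ i, D o i = D i i) {u : ι → K} (huo : u o = 1) (hu : ∀ i, 2 * u i ≠ 1)
    (hDu : ∀ v, v ⬝ᵥ u = 0 → v ⬝ᵥ D *ᵥ v = 0) : D = 0 := by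
  classical
  have polarized (i j : ι) :
      D i i + D j j + 2 * D i j - 2 * (u i + u j) * (D o i + D o j) = 0 := by
    have hv : (Pi.single i 1 + Pi.single j 1 - (u i + u j) • Pi.single o 1) ⬝ᵥ u = 0 := by
      simp [sub_dotProduct, add_dotProduct, huo]
    have hDv := hDu _ hv
    simp only [mulVec_sub, mulVec_add, mulVec_smul, mulVec_single_one, sub_dotProduct,
      add_dotProduct, smul_dotProduct, single_one_dotProduct, Pi.sub_apply, Pi.add_apply,
      Pi.smul_apply, col_apply, smul_eq_mul, hoo, hD.apply o, hD.apply i j] at hDv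
    linear_combination hDv
  have row_eq_zero (i : ι) : D o i = 0 := by
    have factored : (1 - 2 * u i) * D o i = 0 := by
      linear_combination polarized i o + ho i - 2 * hD.apply o i + (2 * u i + 2 * u o - 1) * hoo +
        2 * D o i * huo
    exact (mul_eq_zero.1 factored).resolve_left (sub_ne_zero.2 (hu i).symm)
  ext i j
  have two_mul_apply : 2 * D i j = 0 := by
    simpa [← ho, row_eq_zero] using polarized i j
  exact (mul_eq_zero.1 two_mul_apply).resolve_left two_ne_zero

section LiftedThetaBody

variable {V : Type*}

/-- The lifted theta body of `G`. The index set `{0} ∪ V` is `Option V`, with `none` as `0`. -/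
def liftedThetaBody (G : SimpleGraph V) : Set (Matrix (Option V) (Option V) ℝ) :=
  {X | X.PosSemidef ∧ X none none = 1 ∧
    (∀ i : V, X none (some i) = X (some i) (some i)) ∧
    (∀ i j : V, G.Adj i j → X (some i) (some j) = 0)}

variable {G : SimpleGraph V} {X : Matrix (Option V) (Option V) ℝ}

theorem isSymm_of_mem_liftedThetaBody (hX : X ∈ liftedThetaBody G) : X.IsSymm :=
  isHermitian_iff_isSymm.1 hX.1.1

section ChangeOfHandle

variable [DecidableEq V]

/-- The curve of coefficient vectors that tilts the handle `x₀` towards `x_a`. -/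
def tiltedHandle (a : Option V) (t : ℝ) : Option V → ℝ := Pi.single none 1 + t • Pi.single a 1

theorem tiltedHandle_zero (a : Option V) : tiltedHandle a 0 = Pi.single none 1 := by
  rw [tiltedHandle, zero_smul, add_zero]

variable [Fintype V]

/-- For `X` the Gram matrix of vectors `x₀, x_i`, the coordinates (as rows) of the vector
`y = ∑ a, v a • x_a` and of its orthogonal projections onto the lines `ℝ x_i`. When `x_i = 0` the
quotient `0 / 0 = 0` is the intended coefficient. -/
noncomputable def handleProjections (X : Matrix (Option V) (Option V) ℝ) (v : Option V → ℝ) :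
    Matrix (Option V) (Option V) ℝ
  | none => v
  | some i => Pi.single (some i) ((X *ᵥ v) (some i) / X (some i) (some i))

/-- The Gram matrix of the vectors of `handleProjections X v`, scaled to have entry `1` at `0`. -/
noncomputable def changeHandle (X : Matrix (Option V) (Option V) ℝ) (v : Option V → ℝ) :
    Matrix (Option V) (Option V) ℝ :=
  (v ⬝ᵥ X *ᵥ v)⁻¹ • (handleProjections X v * X * (handleProjections X v)ᵀ)

theorem changeHandle_apply (v : Option V → ℝ) (a b : Option V) :
    changeHandle X v a b =
      (v ⬝ᵥ X *ᵥ v)⁻¹ * (handleProjections X v a ⬝ᵥ X *ᵥ handleProjections X v b) := by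
  rw [changeHandle, Matrix.smul_apply, smul_eq_mul, mul_mul_apply, transpose_transpose]

theorem changeHandle_none_some (v : Option V → ℝ) (i : V) :
    changeHandle X v none (some i) = (v ⬝ᵥ X *ᵥ v)⁻¹ *
      ((v ᵥ* X) (some i) * (X *ᵥ v) (some i) / X (some i) (some i)) := by
  simp only [changeHandle_apply, handleProjections, dotProduct_mulVec, dotProduct_single,
    mul_div_assoc]

theorem changeHandle_some_some (v : Option V → ℝ) (i j : V) :
    changeHandle X v (some i) (some j) = (v ⬝ᵥ X *ᵥ v)⁻¹ *
      ((X *ᵥ v) (some i) / X (some i) (some i) * X (some i) (some j) *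
        ((X *ᵥ v) (some j) / X (some j) (some j))) := by
  simp only [changeHandle_apply, handleProjections, single_dotProduct, mulVec_single, col_apply,
    Pi.smul_apply, MulOpposite.smul_eq_mul_unop, MulOpposite.unop_op, mul_assoc]

theorem changeHandle_mem_liftedThetaBody (hX : X.PosSemidef)
    (hXG : ∀ i j : V, G.Adj i j → X (some i) (some j) = 0) {v : Option V → ℝ}
    (hv : v ⬝ᵥ X *ᵥ v ≠ 0) : changeHandle X v ∈ liftedThetaBody G := by
  refine ⟨?_, ?_, fun i => ?_, fun i j hij => ?_⟩
  · exact (hX.mul_mul_conjTranspose_same _).smul (inv_nonneg.2 (hX.dotProduct_mulVec_nonneg v))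
  · rw [changeHandle_apply]
    exact inv_mul_cancel₀ hv
  · rw [changeHandle_none_some, changeHandle_some_some, ← mulVec_transpose,
      (isHermitian_iff_isSymm.1 hX.1).eq]
    by_cases hi : X (some i) (some i) = 0
    · simp only [hi, div_zero, mul_zero]
    · field_simp
  · rw [changeHandle_some_some, hXG i j hij, mul_zero, zero_mul, mul_zero]

theorem changeHandle_single_none (hX : X ∈ liftedThetaBody G) :
    changeHandle X (Pi.single none 1) = X := by
  obtain ⟨hpos, h00, h0, hG⟩ := hX
  have hsymm := isHermitian_iff_isSymm.1 hpos.1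
  have quad_none : (Pi.single none 1 : Option V → ℝ) ⬝ᵥ X *ᵥ Pi.single none 1 = 1 := by simp [h00]
  have mulVec_none (i : V) : (X *ᵥ Pi.single none 1) (some i) = X (some i) (some i) := by
    simp [hsymm.apply, h0]
  have hmem := changeHandle_mem_liftedThetaBody hpos hG (quad_none ▸ one_ne_zero)
  have none_some (i : V) : changeHandle X (Pi.single none 1) none (some i) = X none (some i) := by
    rw [changeHandle_none_some, ← mulVec_transpose, hsymm.eq, mulVec_none, quad_none, inv_one,
      one_mul, mul_self_div_self, h0]
  ext a b
  rcases a with _ | i <;> rcases b with _ | j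
  · rw [hmem.2.1, h00]
  · exact none_some j
  · rw [(isSymm_of_mem_liftedThetaBody hmem).apply, none_some, hsymm.apply]
  · rw [changeHandle_some_some, quad_none, mulVec_none, mulVec_none, inv_one, one_mul]
    have apply_eq_zero {b : Option V} (hb : X b b = 0) (a : Option V) : X a b = 0 :=
      apply_eq_zero_of_posSemidef_of_diag_eq_zero hpos hb a
    by_cases hj : X (some j) (some j) = 0
    · rw [apply_eq_zero hj, mul_zero, zero_mul]
    by_cases hi : X (some i) (some i) = 0
    · rw [hsymm.apply (some j) (some i), apply_eq_zero hi (some j), mul_zero, zero_mul]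
    · rw [div_self hi, div_self hj, one_mul, mul_one]

theorem differentiableAt_changeHandle_apply {v : ℝ → Option V → ℝ} {t₀ : ℝ}
    (hv : DifferentiableAt ℝ v t₀) (hv₀ : v t₀ ⬝ᵥ X *ᵥ v t₀ ≠ 0) (a b : Option V) :
    DifferentiableAt ℝ (fun t => changeHandle X (v t) a b) t₀ := by
  have hproj (a c : Option V) :
      DifferentiableAt ℝ (fun t => handleProjections X (v t) a c) t₀ := by
    cases a with
    | none => exact differentiableAt_pi.1 hv c
    | some i =>
      simp only [handleProjections, Pi.single_apply, mulVec, dotProduct]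
      split_ifs <;> fun_prop
  have hquad : DifferentiableAt ℝ (fun t => v t ⬝ᵥ X *ᵥ v t) t₀ := by
    simp only [mulVec, dotProduct]
    fun_prop
  simp only [changeHandle_apply]
  refine (hquad.inv hv₀).mul ?_
  simp only [mulVec, dotProduct]
  fun_prop

theorem mulVec_tiltedHandle_apply (a b : Option V) (t : ℝ) :
    (X *ᵥ tiltedHandle a t) b = X b none + t * X b a := by
  simp [tiltedHandle, mulVec_add, mulVec_smul]

theorem tiltedHandle_dotProduct_mulVec (hX : X.IsSymm) (a : Option V) (t : ℝ) :
    tiltedHandle a t ⬝ᵥ X *ᵥ tiltedHandle a t =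
      X none none + 2 * X none a * t + X a a * t ^ 2 := by
  conv_lhs => enter [1]; rw [tiltedHandle]
  rw [add_dotProduct, smul_dotProduct, single_one_dotProduct, single_one_dotProduct,
    mulVec_tiltedHandle_apply, mulVec_tiltedHandle_apply, hX.apply none a, smul_eq_mul]
  ring

theorem hasDerivAt_changeHandle_tiltedHandle (hX : X.IsSymm) (h00 : X none none = 1) {k : V}
    (h0k : X none (some k) = X (some k) (some k)) (hk : X (some k) (some k) ≠ 0) (a : Option V) :
    HasDerivAt (fun t => changeHandle X (tiltedHandle a t) none (some k))
      (2 * (X a (some k) - X none a * X none (some k))) 0 := by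
  simp only [changeHandle_none_some, ← mulVec_transpose, hX.eq, mulVec_tiltedHandle_apply,
    tiltedHandle_dotProduct_mulVec hX, h00, hX.apply none (some k), hX.apply a (some k), h0k]
  have hquad : HasDerivAt (fun t => 1 + 2 * X none a * t + X a a * t ^ 2) (2 * X none a) 0 := by
    refine ((((hasDerivAt_id 0).const_mul _).const_add 1).add
      ((hasDerivAt_pow 2 0).const_mul (X a a))).congr_deriv ?_
    simp
  have hlin : HasDerivAt (fun t => X (some k) (some k) + t * X a (some k)) (X a (some k)) 0 :=
    (((hasDerivAt_id 0).mul_const _).const_add _).congr_deriv (one_mul _)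
  refine ((hquad.inv (by simp)).mul ((hlin.mul hlin).div_const _)).congr_deriv ?_
  simp only [mul_zero, add_zero, ne_eq, OfNat.ofNat_ne_zero, not_false_eq_true, zero_pow, one_pow,
    div_one, Pi.mul_apply, zero_mul, mul_self_div_self, neg_mul, Pi.inv_apply, inv_one, one_mul]
  field_simp
  ring

end ChangeOfHandle

theorem IsVertex.apply_eq_mul_of_liftedThetaBody [Fintype V]
    (hX : IsVertex (liftedThetaBody G) X) (a b : Option V) : X a b = X none a * X none b := by
  classical
  obtain ⟨hpos, h00, h0, hG⟩ := hX.1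
  have hsymm := isSymm_of_mem_liftedThetaBody hX.1
  rcases b with _ | k
  · rw [h00, mul_one, hsymm.apply]
  by_cases hk : X (some k) (some k) = 0
  · rw [h0 k, apply_eq_zero_of_posSemidef_of_diag_eq_zero hpos hk, hk, mul_zero]
  let γ (t : ℝ) := changeHandle X (tiltedHandle a t)
  have γ_zero : γ 0 = X := by
    simp only [γ, tiltedHandle_zero, changeHandle_single_none hX.1]
  have scale_ne_zero : ∀ᶠ t in nhds 0, tiltedHandle a t ⬝ᵥ X *ᵥ tiltedHandle a t ≠ 0 := by
    simp only [tiltedHandle_dotProduct_mulVec hsymm]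
    exact ContinuousAt.eventually_ne (by fun_prop) (by simp [h00])
  have γ_mem : ∀ᶠ t in nhds 0, γ t ∈ liftedThetaBody G :=
    scale_ne_zero.mono fun t ht => changeHandle_mem_liftedThetaBody hpos hG ht
  have γ_differentiableAt : ∀ a b, DifferentiableAt ℝ (fun t => γ t a b) 0 :=
    differentiableAt_changeHandle_apply (by unfold tiltedHandle; fun_prop)
      scale_ne_zero.self_of_nhds
  have velocity_eq_zero := hX.deriv_apply_eq_zero (fun _ => isSymm_of_mem_liftedThetaBody)
    γ_zero γ_mem γ_differentiableAt none (some k)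
  have velocity_eq := (hasDerivAt_changeHandle_tiltedHandle hsymm h00 (h0 k) hk a).deriv
  linarith [velocity_eq.symm.trans velocity_eq_zero]

section Incidence

variable [DecidableEq V]

/-- The vector `1 ⊕ χ_S`. -/
def liftedIncidence (S : Finset V) : Option V → ℝ :=
  fun o => o.elim 1 fun i => if i ∈ S then 1 else 0

theorem two_mul_liftedIncidence_ne_one (S : Finset V) (a : Option V) :
    2 * liftedIncidence S a ≠ 1 := by
  rcases a with _ | i
  · simp [liftedIncidence]
  · by_cases hi : i ∈ S <;> simp [liftedIncidence, hi]

theorem vecMulVec_liftedIncidence_mem_liftedThetaBody_iff [Finite V] {S : Finset V} :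
    vecMulVec (liftedIncidence S) (liftedIncidence S) ∈ liftedThetaBody G ↔
      ∀ i ∈ S, ∀ j ∈ S, ¬G.Adj i j := by
  have hpos := posSemidef_vecMulVec_self_star (liftedIncidence S)
  rw [star_trivial] at hpos
  simp only [liftedThetaBody, Set.mem_ofPred_eq, hpos, vecMulVec_apply, liftedIncidence,
    Option.elim_none, Option.elim_some, true_and]
  grind

theorem IsVertex.exists_eq_vecMulVec_liftedIncidence [Fintype V]
    (hX : IsVertex (liftedThetaBody G) X) :
    ∃ S : Finset V, X = vecMulVec (liftedIncidence S) (liftedIncidence S) := by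
  have hmul := hX.apply_eq_mul_of_liftedThetaBody
  obtain ⟨-, h00, h0, -⟩ := hX.1
  let S : Finset V := {i | X none (some i) = 1}
  refine ⟨S, ?_⟩
  have row_eq (a : Option V) : X none a = liftedIncidence S a := by
    rcases a with _ | i
    · exact h00
    · have idempotent : IsIdempotentElem (X none (some i)) := by
        rw [IsIdempotentElem, ← hmul, h0]
      simp only [liftedIncidence, Option.elim_some, S, Finset.mem_filter, Finset.mem_univ, true_and]
      split_ifs with hi
      · exact hi
      · exact (IsIdempotentElem.iff_eq_zero_or_one.1 idempotent).resolve_right hi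
  ext a b
  rw [hmul, vecMulVec_apply, row_eq, row_eq]

end Incidence

section DiagConstraint

variable [DecidableEq V]

/-- The symmetric matrix representing, up to a factor `2`, the functional `Y ↦ Y 0 i - Y i i`, which
vanishes on the lifted theta body. -/
def diagConstraint (i : V) : Matrix (Option V) (Option V) ℝ :=
  single none (some i) 1 + single (some i) none 1 - 2 • single (some i) (some i) 1

theorem isSymm_diagConstraint (i : V) : (diagConstraint i).IsSymm := by
  simp [diagConstraint, IsSymm, add_comm]

theorem trace_diagConstraint_mul [Fintype V] {Y : Matrix (Option V) (Option V) ℝ} (hY : Y.IsSymm)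
    (i : V) : (diagConstraint i * Y).trace = 2 * (Y none (some i) - Y (some i) (some i)) := by
  simp only [diagConstraint, sub_mul, add_mul, trace_sub, trace_add, trace_single_mul,
    hY.apply none (some i), one_smul, two_smul]
  ring

end DiagConstraint

theorem isVertex_liftedThetaBody_vecMulVec [Fintype V] {u : Option V → ℝ}
    (hu0 : u none = 1) (hu : ∀ a, 2 * u a ≠ 1)
    (hX : vecMulVec u u ∈ liftedThetaBody G) :
    IsVertex (liftedThetaBody G) (vecMulVec u u) := by
  classical
  refine isVertex_iff_forall_trace_mul_eq_zero.2 ⟨hX, fun D hD hN => ?_⟩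
  have h00 : D none none = 0 := by
    have hmem : single none none 1 ∈ normalConeM (liftedThetaBody G) (vecMulVec u u) :=
      mem_normalConeM_of_forall_trace_mul_eq (transpose_single _ _ _) fun Y hY => by
        rw [trace_single_mul, trace_single_mul, hY.2.1, hX.2.1]
    simpa only [trace_single_mul, one_smul] using hN _ hmem
  have h0 (i : V) : D none (some i) = D (some i) (some i) := by
    have hmem : diagConstraint i ∈ normalConeM (liftedThetaBody G) (vecMulVec u u) :=
      mem_normalConeM_of_forall_trace_mul_eq (isSymm_diagConstraint i) fun Y hY => by
        rw [trace_diagConstraint_mul (isSymm_of_mem_liftedThetaBody hY), hY.2.2.1,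
          trace_diagConstraint_mul (isSymm_of_mem_liftedThetaBody hX), hX.2.2.1, sub_self, sub_self]
    have hDi := hN _ hmem
    rw [trace_diagConstraint_mul hD] at hDi
    linarith
  have hDu (v : Option V → ℝ) (hv : v ⬝ᵥ u = 0) : v ⬝ᵥ D *ᵥ v = 0 := by
    have hvX : v ⬝ᵥ vecMulVec u u *ᵥ v = 0 := by
      rw [vecMulVec_mulVec, dotProduct_comm u v, hv, MulOpposite.op_zero, zero_smul,
        dotProduct_zero]
    have hDv := hN _ (neg_vecMulVec_mem_normalConeM (fun Y hY => hY.1) hvX)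
    rwa [neg_mul, trace_neg, neg_eq_zero, trace_vecMulVec_mul_eq_dotProduct_mulVec] at hDv
  exact eq_zero_of_forall_dotProduct_mulVec_eq_zero hD h00
    (Option.forall.2 ⟨rfl, h0⟩) hu0 hu hDu

end LiftedThetaBody

theorem lifted_theta_body_vertices {V : Type*} [Fintype V] [DecidableEq V] (G : SimpleGraph V)
    (TH : Set (Matrix (Option V) (Option V) ℝ))
    (hTH : TH = {X | X.PosSemidef ∧ X none none = 1 ∧
      (∀ i : V, X none (some i) = X (some i) (some i)) ∧
      (∀ i j : V, G.Adj i j → X (some i) (some j) = 0)}) :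
    {X | X ∈ TH ∧ IsVertex TH X} =
      {X | ∃ S : Finset V, (∀ i ∈ S, ∀ j ∈ S, ¬ G.Adj i j) ∧
        X = Matrix.vecMulVec (fun o => o.elim 1 fun i => if i ∈ S then 1 else 0)
              (fun o => o.elim 1 fun i => if i ∈ S then 1 else 0)} := by
  obtain rfl : TH = liftedThetaBody G := hTH
  ext X
  constructor
  · rintro ⟨hX, hvertex⟩
    obtain ⟨S, rfl⟩ := hvertex.exists_eq_vecMulVec_liftedIncidence
    exact ⟨S, vecMulVec_liftedIncidence_mem_liftedThetaBody_iff.1 hX, rfl⟩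
  · rintro ⟨S, hS, rfl⟩
    have hX := vecMulVec_liftedIncidence_mem_liftedThetaBody_iff.2 hS
    exact ⟨hX, isVertex_liftedThetaBody_vecMulVec rfl (two_mul_liftedIncidence_ne_one S) hX⟩
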